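/- arXiv:1701.01782 — 3 statements merged into one kernel-verified Lean document; each statement's English description precedes it below -/
import Mathlib

section
/- Let (X,d) be a complete, locally compact, separable length space, let 0 < c_U ≤ 1 ≤ C_U < ∞, and let U ⊆ X be a (c_U,C_U)-inner uniform domain. Then for any two points x, y in the completion Ũ of (U,d_U) there exists a continuous curve γ:[0,1]→Ũ with γ(0)=x, γ(1)=y, whose length measured in the metric d_U is at most C_U·d_U(x,y), and which satisfies δ_U(γ(t)) ≥ c_U·min(d_U(x,γ(t)), d_U(y,γ(t))) for all t ∈ [0,1]. -/
/-!
Approximate `x` and `y` by sequences `x_n`, `y_n` of points of `U`, and join them by inner uniform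
curves. Reparametrized (`exists_reparam`), the `n`-th curve becomes Lipschitz in the metric `d_U`
with constant `L_n = CU · d_U(x_n, y_n) → CU · d_U(x, y)`; see `exists_lipschitz_curve`. Instead
of extracting a uniformly convergent subsequence, the limit curve is taken pointwise along a free
ultrafilter on `ℕ`: the Lipschitz bound, the endpoints and the inequality for `δ_U` all pass to
pointwise limits, and a Lipschitz curve on `[0,1]` is continuous of length at most its constant.

What has to be shown is that for each fixed `t` the points `γ_n(t)` converge in `Ũ` along the
ultrafilter. Either they tend to `x`, or they tend to `y`, or, almost always, they stay at
`d_U`-distance at least `ε` from both endpoints. In the last case inner uniformity gives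
`δ_U(γ_n(t)) ≥ cU · ε`, so that the points lie in a bounded closed subset of `X` contained in `U`.
Such a set is compact because `X` is proper (Hopf–Rinow, `IsLengthSpace.properSpace`), and the
inclusion of `U` into `Ũ` is continuous since `d_U` agrees with `d` at small scales
(`innerDist_le_of_dist_lt`).
-/

open Set Metric

/-- The length of a curve `γ` on the time interval `[0,1]`, defined as the supremum over
partitions `0 = t₀ < t₁ < … < t_k = 1` of `∑ d(γ(t_{i-1}), γ(t_i))`. -/
noncomputable def curveLength {X : Type*} [PseudoMetricSpace X] (γ : ℝ → X) : ENNReal :=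
  eVariationOn γ (Set.Icc 0 1)

/-- A metric space is a length space if the distance between any two points is the infimum
of lengths of continuous curves joining them. -/
def IsLengthSpace (X : Type*) [PseudoMetricSpace X] : Prop :=
  ∀ x y : X, ENNReal.ofReal (dist x y) =
    ⨅ (γ : ℝ → X) (_ : ContinuousOn γ (Set.Icc 0 1)) (_ : γ 0 = x) (_ : γ 1 = y),
      curveLength γ

/-- The intrinsic (inner) distance `d_U` of an open set `U`: infimum of lengths of continuous
curves joining `x` and `y` inside `U`. -/
noncomputable def innerDist {X : Type*} [PseudoMetricSpace X] (U : Set X) (x y : X) : ENNReal :=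
  ⨅ (γ : ℝ → X) (_ : ContinuousOn γ (Set.Icc 0 1)) (_ : Set.MapsTo γ (Set.Icc 0 1) U)
    (_ : γ 0 = x) (_ : γ 1 = y), curveLength γ

/-- A continuous rectifiable curve `γ : [0,1] → U` is `(cU, CU)`-inner uniform if
`L(γ) ≤ CU · d_U(γ 0, γ 1)` and
`δ_U(γ t) ≥ cU · min (d_U(γ 0, γ t)) (d_U(γ 1, γ t))` for all `t ∈ [0,1]`,
where `δ_U(x) = dist(x, X ∖ U)`. -/
structure IsInnerUniformCurve {X : Type*} [PseudoMetricSpace X] (U : Set X)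
    (cU CU : ℝ) (γ : ℝ → X) : Prop where
  continuousOn : ContinuousOn γ (Set.Icc 0 1)
  mapsTo : Set.MapsTo γ (Set.Icc 0 1) U
  rectifiable : curveLength γ ≠ ⊤
  length_le : curveLength γ ≤ ENNReal.ofReal CU * innerDist U (γ 0) (γ 1)
  dist_to_boundary : ∀ t ∈ Set.Icc (0:ℝ) 1,
    ENNReal.ofReal cU * min (innerDist U (γ 0) (γ t)) (innerDist U (γ 1) (γ t)) ≤
      ENNReal.ofReal (Metric.infDist (γ t) Uᶜ)

/-- `U` is a `(cU, CU)`-inner uniform domain: a connected open set such that any two of its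
points can be joined by a `(cU, CU)`-inner uniform curve. -/
def IsInnerUniformDomain {X : Type*} [PseudoMetricSpace X] (U : Set X) (cU CU : ℝ) : Prop :=
  IsOpen U ∧ IsConnected U ∧
    ∀ x ∈ U, ∀ y ∈ U, ∃ γ : ℝ → X, IsInnerUniformCurve U cU CU γ ∧ γ 0 = x ∧ γ 1 = y

/-- `(Ut, ι)` is (a realization of) the completion `Ũ` of `(U, d_U)`: `Ut` is a complete metric
space, `ι` restricted to `U` is an isometry from `(U, d_U)` onto a dense subset of `Ut`. -/
structure IsInnerCompletion {X : Type*} [MetricSpace X] (U : Set X)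
    (Ut : Type*) [MetricSpace Ut] (ι : X → Ut) : Prop where
  complete : CompleteSpace Ut
  dist_eq : ∀ x ∈ U, ∀ y ∈ U, ENNReal.ofReal (dist (ι x) (ι y)) = innerDist U x y
  dense_image : Dense (ι '' U)

open Filter Topology

/-! ### The Hopf–Rinow theorem -/

/-- In a length space, a point of the open ball of radius `R + η` about `p` is within `η` of the
closed ball of radius `R`. -/
lemma IsLengthSpace.exists_near {X : Type*} [MetricSpace X] (hX : IsLengthSpace X) {p q : X}
    {R η : ℝ} (hR : 0 ≤ R) (hη : 0 < η) (h : dist p q < R + η) :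
    ∃ z, dist p z ≤ R ∧ dist z q < η := by
  rcases le_or_gt (dist p q) R with hle | hgt
  · exact ⟨q, hle, by simpa using hη⟩
  have h1 : ENNReal.ofReal (dist p q) < ENNReal.ofReal (R + η) :=
    (ENNReal.ofReal_lt_ofReal_iff (by linarith)).2 h
  rw [hX p q] at h1
  simp only [iInf_lt_iff] at h1
  obtain ⟨γ, hγ, rfl, rfl, hlen⟩ := h1
  obtain ⟨t, ht, hdt⟩ : R ∈ (fun t => dist (γ 0) (γ t)) '' Icc 0 1 := by
    refine intermediate_value_Icc zero_le_one
      ((continuous_const.dist continuous_id).comp_continuousOn hγ) ⟨?_, hgt.le⟩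
    simpa using hR
  have hdt : dist (γ 0) (γ t) = R := hdt
  refine ⟨γ t, hdt.le, ?_⟩
  have h2 : edist (γ 0) (γ t) + edist (γ t) (γ 1) ≤ curveLength γ := by
    have := eVariationOn.Icc_add_Icc γ (s := univ) ht.1 ht.2 (mem_univ _)
    simp only [univ_inter] at this
    rw [curveLength, ← this]
    exact add_le_add
      (eVariationOn.edist_le γ ⟨le_rfl, ht.1⟩ ⟨ht.1, le_rfl⟩)
      (eVariationOn.edist_le γ ⟨le_rfl, ht.2⟩ ⟨ht.2, le_rfl⟩)
  have h3 := h2.trans_lt hlen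
  rw [edist_dist, edist_dist, ← ENNReal.ofReal_add dist_nonneg dist_nonneg,
    ENNReal.ofReal_lt_ofReal_iff (by linarith)] at h3
  linarith

/-- The Hopf–Rinow theorem: a complete, locally compact length space is proper. -/
lemma IsLengthSpace.properSpace {X : Type*} [MetricSpace X] [CompleteSpace X]
    [LocallyCompactSpace X] (hX : IsLengthSpace X) : ProperSpace X := by
  refine ⟨fun p R => ?_⟩
  by_contra hR
  set S : Set ℝ := {r | IsCompact (closedBall p r)} with hS
  have hdown : ∀ r ∈ S, ∀ r' ≤ r, r' ∈ S := fun r hr r' h =>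
    IsCompact.of_isClosed_subset hr isClosed_closedBall (closedBall_subset_closedBall h)
  have h0 : (0 : ℝ) ∈ S := by simp [hS]
  have hbdd : BddAbove S := ⟨R, fun r hr => by
    by_contra hlt
    exact hR (hdown r hr R (not_le.1 hlt).le)⟩
  set s := sSup S with hs
  have hs0 : 0 ≤ s := le_csSup hbdd h0
  have hsS : IsCompact (closedBall p s) := by
    refine TotallyBounded.isCompact_of_isClosed ?_ isClosed_closedBall
    rw [Metric.totallyBounded_iff]
    intro ε hε
    obtain ⟨r, hr, hlt⟩ := exists_lt_of_lt_csSup ⟨0, h0⟩ (show s - ε / 2 < sSup S by linarith)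
    have hr' : IsCompact (closedBall p (max r 0)) := by
      rcases max_choice r 0 with h | h <;> rw [h]
      exacts [hr, h0]
    obtain ⟨T, hT, hcov⟩ := Metric.totallyBounded_iff.1 hr'.totallyBounded (ε / 2) (by linarith)
    refine ⟨T, hT, fun q hq => ?_⟩
    obtain ⟨z, hz1, hz2⟩ := hX.exists_near (p := p) (q := q) (R := max r 0) (η := ε / 2)
      (le_max_right _ _) (by linarith) (by
        have := mem_closedBall'.1 hq
        have := le_max_left r 0
        linarith)
    have hz := hcov (mem_closedBall'.2 hz1)
    simp only [mem_iUnion, mem_ball] at hz ⊢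
    obtain ⟨y, hy, hzy⟩ := hz
    refine ⟨y, hy, ?_⟩
    have := dist_triangle q z y
    rw [dist_comm q z] at this
    linarith
  obtain ⟨K, hK, hsub⟩ := exists_compact_superset hsS
  obtain ⟨δ, hδ, hδK⟩ := hsS.exists_cthickening_subset_open isOpen_interior hsub
  have : s + δ / 2 ∈ S := by
    refine IsCompact.of_isClosed_subset hK isClosed_closedBall fun q hq => ?_
    obtain ⟨z, hz1, hz2⟩ := hX.exists_near (p := p) (q := q) hs0 hδ (by
      have := mem_closedBall'.1 hq
      linarith)
    refine interior_subset (hδK (mem_cthickening_of_dist_le q z δ _ (mem_closedBall'.2 hz1) ?_))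
    rw [dist_comm]
    exact hz2.le
  have := le_csSup hbdd this
  linarith

/-! ### The intrinsic distance and the length of curves -/

lemma ofReal_dist_le_innerDist {X : Type*} [PseudoMetricSpace X] (U : Set X) (z w : X) :
    ENNReal.ofReal (dist z w) ≤ innerDist U z w := by
  refine le_iInf fun γ => le_iInf fun _ => le_iInf fun _ => le_iInf fun h0 => le_iInf fun h1 => ?_
  subst h0 h1
  rw [← edist_dist]
  exact eVariationOn.edist_le γ (by simp) (by simp)

/-- Nearly shortest curves between nearby points do not leave `U`, so `d_U ≤ d` locally. -/
lemma innerDist_le_of_dist_lt {X : Type*} [PseudoMetricSpace X] (hX : IsLengthSpace X) {U : Set X}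
    {z w : X} {r : ℝ} (hball : ball z r ⊆ U) (h : dist z w < r) :
    innerDist U z w ≤ ENNReal.ofReal (dist z w) := by
  refine le_of_forall_gt fun c hc => ?_
  have hc' : ENNReal.ofReal (dist z w) < min c (ENNReal.ofReal r) :=
    lt_min hc ((ENNReal.ofReal_lt_ofReal_iff (dist_nonneg.trans_lt h)).2 h)
  rw [hX z w] at hc'
  simp only [iInf_lt_iff] at hc'
  obtain ⟨γ, hγ, h0, h1, hlen⟩ := hc'
  refine lt_of_le_of_lt ?_ (hlen.trans_le (min_le_left _ _))
  refine iInf_le_of_le γ (iInf_le_of_le hγ (iInf_le_of_le (fun t ht => hball ?_)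
    (iInf_le_of_le h0 (iInf_le_of_le h1 le_rfl))))
  have h2 : edist (γ t) (γ 0) ≤ curveLength γ := eVariationOn.edist_le γ ht (by simp)
  have h3 := h2.trans_lt (hlen.trans_le (min_le_right _ _))
  rw [h0, edist_dist] at h3
  exact (ENNReal.ofReal_lt_ofReal_iff (dist_nonneg.trans_lt h)).1 h3

lemma innerDist_le_eVariationOn {X : Type*} [PseudoMetricSpace X] {U : Set X} {γ : ℝ → X}
    (hγ : ContinuousOn γ (Icc 0 1)) (hU : MapsTo γ (Icc 0 1) U) {s t : ℝ}
    (hs : 0 ≤ s) (hst : s ≤ t) (ht : t ≤ 1) :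
    innerDist U (γ s) (γ t) ≤ eVariationOn γ (Icc s t) := by
  set ψ : ℝ → ℝ := fun u => s + u * (t - s) with hψ
  have hmap : MapsTo ψ (Icc 0 1) (Icc s t) := fun u hu =>
    ⟨by have := mul_nonneg hu.1 (sub_nonneg.2 hst); simp only [hψ]; linarith,
     by have := mul_le_mul_of_nonneg_right hu.2 (sub_nonneg.2 hst); simp only [hψ]; linarith⟩
  have hmap' : MapsTo ψ (Icc 0 1) (Icc 0 1) := hmap.mono_right (Icc_subset_Icc hs ht)
  have hmono : MonotoneOn ψ (Icc 0 1) := fun u _ v _ huv => by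
    have := mul_le_mul_of_nonneg_right huv (sub_nonneg.2 hst)
    simp only [hψ]; linarith
  have hcont : ContinuousOn ψ (Icc 0 1) := by fun_prop
  refine iInf_le_of_le (γ ∘ ψ) (iInf_le_of_le (hγ.comp hcont hmap') (iInf_le_of_le
    (hU.comp hmap') (iInf_le_of_le (by simp [hψ]) (iInf_le_of_le (by simp [hψ]) ?_))))
  exact eVariationOn.comp_le_of_monotoneOn γ ψ hmono hmap

/-! ### Reparametrization by length -/

/-- A continuous curve whose increments are dominated by those of a function `φ` increasing from
`0` to at most `L` can be run through with speed at most `L`. The time change `τ` is the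
right-continuous generalized inverse of `φ`. It jumps where `φ`, hence the curve, is constant, and
is constant where `φ` jumps, so only the continuity of the curve is needed. -/
lemma exists_reparam {Y : Type*} [MetricSpace Y] {c : ℝ → Y} {φ : ℝ → ℝ} {L : ℝ}
    (hc : ContinuousOn c (Icc 0 1))
    (hφ : ∀ s t, 0 ≤ s → s ≤ t → t ≤ 1 → dist (c s) (c t) ≤ φ t - φ s)
    (hφ0 : φ 0 = 0) (hφ1 : φ 1 ≤ L) :
    ∃ τ : ℝ → ℝ, (∀ s ∈ Icc (0 : ℝ) 1, τ s ∈ Icc (0 : ℝ) 1) ∧ c (τ 0) = c 0 ∧ c (τ 1) = c 1 ∧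
      ∀ s ∈ Icc (0 : ℝ) 1, ∀ t ∈ Icc (0 : ℝ) 1, dist (c (τ s)) (c (τ t)) ≤ L * |s - t| := by
  have hmono : ∀ s t, 0 ≤ s → s ≤ t → t ≤ 1 → φ s ≤ φ t := fun s t h1 h2 h3 => by
    have := hφ s t h1 h2 h3
    have := dist_nonneg (x := c s) (y := c t)
    linarith
  have hL : 0 ≤ L := by
    have := hmono 0 1 le_rfl zero_le_one le_rfl
    linarith
  set A : ℝ → Set ℝ := fun s => {t | t ∈ Icc (0 : ℝ) 1 ∧ φ t ≤ L * s} with hA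
  have hA0 : ∀ s, 0 ≤ s → (0 : ℝ) ∈ A s := fun s hs =>
    ⟨by simp, by rw [hφ0]; exact mul_nonneg hL hs⟩
  have hAb : ∀ s, BddAbove (A s) := fun s => ⟨1, fun t ht => ht.1.2⟩
  have hτ : ∀ s ∈ Icc (0 : ℝ) 1, sSup (A s) ∈ Icc (0 : ℝ) 1 := fun s hs =>
    ⟨le_csSup (hAb s) (hA0 s hs.1), csSup_le ⟨0, hA0 s hs.1⟩ fun t ht => ht.1.2⟩
  have key : ∀ s ∈ Icc (0 : ℝ) 1, ∀ t ∈ Icc (0 : ℝ) 1, s ≤ t →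
      dist (c (sSup (A s))) (c (sSup (A t))) ≤ L * (t - s) := by
    intro s hs t ht hst
    have hle : sSup (A s) ≤ sSup (A t) := csSup_le_csSup (hAb t) ⟨0, hA0 s hs.1⟩
      fun u hu => ⟨hu.1, hu.2.trans (mul_le_mul_of_nonneg_left hst hL)⟩
    rcases hle.eq_or_lt with heq | hlt
    · rw [heq, dist_self]
      exact mul_nonneg hL (sub_nonneg.2 hst)
    have hτs := hτ s hs
    have hτt := hτ t ht
    set a := sSup (A s) with ha
    set b := sSup (A t) with hb
    obtain ⟨m, ham, hmb⟩ := exists_between hlt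
    have hTa : Tendsto c (𝓝[>] a) (𝓝 (c a)) :=
      (hc a hτs).mono_left (nhdsWithin_le_of_mem (mem_of_superset (Ioc_mem_nhdsGT hlt)
        fun u hu => ⟨hτs.1.trans hu.1.le, hu.2.trans hτt.2⟩))
    have hTb : Tendsto c (𝓝[<] b) (𝓝 (c b)) :=
      (hc b hτt).mono_left (nhdsWithin_le_of_mem (mem_of_superset (Ico_mem_nhdsLT hlt)
        fun u hu => ⟨hτs.1.trans hu.1, hu.2.le.trans hτt.2⟩))
    have hT := (hTa.comp tendsto_fst).dist (hTb.comp (tendsto_snd (f := 𝓝[>] a)))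
    refine le_of_tendsto hT ?_
    filter_upwards [prod_mem_prod (Ioo_mem_nhdsGT ham) (Ioo_mem_nhdsLT hmb)]
    rintro ⟨u, v⟩ ⟨hu, hv⟩
    simp only [Function.comp] at hu hv ⊢
    have hu0 : 0 ≤ u := hτs.1.trans hu.1.le
    have huv : u ≤ v := (hu.2.trans hv.1).le
    have h1 : L * s < φ u := by
      by_contra hcon
      exact absurd (le_csSup (hAb s)
        ⟨⟨hu0, (huv.trans hv.2.le).trans hτt.2⟩, not_lt.1 hcon⟩) (not_le.2 hu.1)
    obtain ⟨v', hv', hvv⟩ := exists_lt_of_lt_csSup ⟨0, hA0 t ht.1⟩ hv.2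
    have h2 := hmono v v' (hu0.trans huv) hvv.le hv'.1.2
    have h3 := hφ u v hu0 huv (hv.2.le.trans hτt.2)
    have h4 := hv'.2
    linarith
  refine ⟨fun s => sSup (A s), hτ, ?_, ?_, ?_⟩
  · have hcl : IsClosed (Icc (0 : ℝ) 1 ∩ c ⁻¹' {c 0}) :=
      hc.preimage_isClosed_of_isClosed isClosed_Icc isClosed_singleton
    have hsub : A 0 ⊆ Icc (0 : ℝ) 1 ∩ c ⁻¹' {c 0} := fun t ht => by
      refine ⟨ht.1, ?_⟩
      have h1 := hφ 0 t le_rfl ht.1.1 ht.1.2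
      have h2 := ht.2
      have : dist (c 0) (c t) ≤ 0 := by linarith
      exact (dist_le_zero.1 this).symm
    exact (closure_minimal hsub hcl (csSup_mem_closure ⟨0, hA0 0 le_rfl⟩ (hAb 0))).2
  · have h1 : (1 : ℝ) ∈ A 1 := ⟨by simp, by simpa using hφ1⟩
    have : sSup (A 1) = 1 :=
      le_antisymm (hτ 1 (by simp)).2 (le_csSup (hAb 1) h1)
    simp only [this]
  · intro s hs t ht
    rcases le_total s t with h | h
    · rw [abs_sub_comm, abs_of_nonneg (sub_nonneg.2 h)]
      exact key s hs t ht h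
    · rw [abs_of_nonneg (sub_nonneg.2 h), dist_comm]
      exact key t ht s hs h

/-! ### Inner uniform curves in the completion -/

lemma IsInnerCompletion.dist_le {X : Type*} [MetricSpace X] {U : Set X} {Ut : Type*}
    [MetricSpace Ut] {ι : X → Ut} (hcomp : IsInnerCompletion U Ut ι) {z w : X} (hz : z ∈ U)
    (hw : w ∈ U) : dist z w ≤ dist (ι z) (ι w) := by
  have := ofReal_dist_le_innerDist U z w
  rwa [← hcomp.dist_eq z hz w hw, ENNReal.ofReal_le_ofReal_iff dist_nonneg] at this

lemma IsInnerCompletion.continuousOn {X : Type*} [MetricSpace X] (hX : IsLengthSpace X)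
    {U : Set X} (hU : IsOpen U) {Ut : Type*} [MetricSpace Ut] {ι : X → Ut}
    (hcomp : IsInnerCompletion U Ut ι) : ContinuousOn ι U := by
  intro z hz
  obtain ⟨r, hr, hball⟩ := Metric.isOpen_iff.1 hU z hz
  refine ContinuousAt.continuousWithinAt (Metric.continuousAt_iff.2 fun ε hε =>
    ⟨min r ε, lt_min hr hε, fun {w} hw => ?_⟩)
  have hwr : dist w z < r := hw.trans_le (min_le_left _ _)
  have h := innerDist_le_of_dist_lt hX hball (by rwa [dist_comm] : dist z w < r)
  rw [← hcomp.dist_eq z hz w (hball hwr), ENNReal.ofReal_le_ofReal_iff dist_nonneg] at h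
  rw [dist_comm]
  exact h.trans_lt (by rw [dist_comm]; exact hw.trans_le (min_le_right _ _))

/-- Inner uniform curves, parametrized so as to be `CU · d_U(x, y)`-Lipschitz in `Ũ`. -/
lemma exists_lipschitz_curve {X : Type*} [MetricSpace X] (hX : IsLengthSpace X) {cU CU : ℝ}
    (hcU0 : 0 < cU) (hCU : 1 ≤ CU) {U : Set X} (hU : IsInnerUniformDomain U cU CU)
    {Ut : Type*} [MetricSpace Ut] {ι : X → Ut} (hcomp : IsInnerCompletion U Ut ι)
    {x y : X} (hx : x ∈ U) (hy : y ∈ U) :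
    ∃ g : ℝ → X, (∀ s ∈ Icc (0 : ℝ) 1, g s ∈ U) ∧ ι (g 0) = ι x ∧ ι (g 1) = ι y ∧
      (∀ s ∈ Icc (0 : ℝ) 1, ∀ t ∈ Icc (0 : ℝ) 1,
        dist (ι (g s)) (ι (g t)) ≤ CU * dist (ι x) (ι y) * |s - t|) ∧
      ∀ s ∈ Icc (0 : ℝ) 1, cU * min (dist (ι x) (ι (g s))) (dist (ι y) (ι (g s))) ≤
        infDist (g s) Uᶜ := by
  obtain ⟨γ, hγ, rfl, rfl⟩ := hU.2.2 x hx y hy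
  have hfin : ∀ s t : ℝ, 0 ≤ s → t ≤ 1 → eVariationOn γ (Icc s t) ≠ ⊤ := fun s t hs ht =>
    ne_top_of_le_ne_top hγ.rectifiable (eVariationOn.mono γ (Icc_subset_Icc hs ht))
  obtain ⟨τ, hτ, h0, h1, hlip⟩ := exists_reparam (c := ι ∘ γ)
    (φ := fun t => (eVariationOn γ (Icc 0 t)).toReal) (L := CU * dist (ι (γ 0)) (ι (γ 1)))
    ((hcomp.continuousOn hX hU.1).comp hγ.continuousOn hγ.mapsTo)
    (fun s t hs hst ht => by
      have hadd := eVariationOn.Icc_add_Icc γ (s := univ) hs hst (mem_univ _)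
      simp only [univ_inter] at hadd
      have hle := innerDist_le_eVariationOn hγ.continuousOn hγ.mapsTo hs hst ht
      rw [← hcomp.dist_eq _ (hγ.mapsTo ⟨hs, hst.trans ht⟩) _ (hγ.mapsTo ⟨hs.trans hst, ht⟩),
        ENNReal.ofReal_le_iff_le_toReal (hfin s t hs ht)] at hle
      rw [← hadd, ENNReal.toReal_add (hfin 0 s le_rfl (hst.trans ht)) (hfin s t hs ht)]
      simpa using hle)
    (by simp [eVariationOn.subsingleton])
    (by
      have := hγ.length_le
      rw [← hcomp.dist_eq _ hx _ hy, ← ENNReal.ofReal_mul (by linarith)] at this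
      exact ENNReal.toReal_le_of_le_ofReal (by positivity) this)
  refine ⟨γ ∘ τ, fun s hs => hγ.mapsTo (hτ s hs), h0, h1, hlip, fun s hs => ?_⟩
  have h := hγ.dist_to_boundary (τ s) (hτ s hs)
  have hm := hγ.mapsTo (hτ s hs)
  rw [← hcomp.dist_eq _ hx _ hm, ← hcomp.dist_eq _ hy _ hm, ← ENNReal.ofReal_min,
    ← ENNReal.ofReal_mul hcU0.le, ENNReal.ofReal_le_ofReal_iff infDist_nonneg] at h
  exact h

/-! ### The limit curve -/

/-- Lemma 2.6 of the paper: in a complete, locally compact, separable length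
space, if `U` is a `(cU, CU)`-inner uniform domain with `0 < cU ≤ 1 ≤ CU`, then any two points
`x, y` of the completion `Ũ` of `(U, d_U)` can be joined by a continuous curve `γ : [0,1] → Ũ`
of length (in the `d_U`-metric) at most `CU · d_U(x,y)`, satisfying
`δ_U(γ t) ≥ cU · min (d_U(x, γ t)) (d_U(y, γ t))` for all `t`, where `δ_U` denotes the
continuous extension to `Ũ` of the distance to the complement of `U`. -/
theorem statement_0 {X : Type*} [MetricSpace X] [CompleteSpace X] [LocallyCompactSpace X]
    [TopologicalSpace.SeparableSpace X] (hX : IsLengthSpace X)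
    (cU CU : ℝ) (hcU0 : 0 < cU) (hcU1 : cU ≤ 1) (hCU : 1 ≤ CU)
    (U : Set X) (hU : IsInnerUniformDomain U cU CU)
    (Ut : Type*) [MetricSpace Ut] (ι : X → Ut) (hcomp : IsInnerCompletion U Ut ι)
    (δt : Ut → ℝ) (hδt_cont : Continuous δt)
    (hδt : ∀ x ∈ U, δt (ι x) = Metric.infDist x Uᶜ)
    (x y : Ut) :
    ∃ γ : ℝ → Ut, ContinuousOn γ (Set.Icc 0 1) ∧ γ 0 = x ∧ γ 1 = y ∧
      curveLength γ ≤ ENNReal.ofReal (CU * dist x y) ∧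
      ∀ t ∈ Set.Icc (0:ℝ) 1, cU * min (dist x (γ t)) (dist y (γ t)) ≤ δt (γ t) := by
  have hproper := hX.properSpace
  obtain ⟨x', hx', hxlim⟩ := mem_closure_iff_seq_limit.1 (hcomp.dense_image x)
  obtain ⟨y', hy', hylim⟩ := mem_closure_iff_seq_limit.1 (hcomp.dense_image y)
  choose xs hxsU hxs using hx'
  choose ys hysU hys using hy'
  obtain rfl : (fun n => ι (xs n)) = x' := funext hxs
  obtain rfl : (fun n => ι (ys n)) = y' := funext hys
  choose g hgU hg0 hg1 hglip hgδ using fun n =>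
    exists_lipschitz_curve hX hcU0 hCU hU hcomp (hxsU n) (hysU n)
  let 𝒰 : Ultrafilter ℕ := hyperfilter ℕ
  have hxlim : Tendsto (fun n => ι (xs n)) 𝒰 (𝓝 x) := hxlim.mono_left Nat.hyperfilter_le_atTop
  have hylim : Tendsto (fun n => ι (ys n)) 𝒰 (𝓝 y) := hylim.mono_left Nat.hyperfilter_le_atTop
  have hlim : ∀ t ∈ Icc (0 : ℝ) 1, ∃ z, Tendsto (fun n => ι (g n t)) 𝒰 (𝓝 z) := by
    intro t ht
    by_cases hA : ∀ ε > 0, ∀ᶠ n in 𝒰, dist (ι (xs n)) (ι (g n t)) < ε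
    · refine ⟨x, hxlim.congr_dist (Metric.tendsto_nhds.2 fun ε hε => ?_)⟩
      simpa using hA ε hε
    by_cases hB : ∀ ε > 0, ∀ᶠ n in 𝒰, dist (ι (ys n)) (ι (g n t)) < ε
    · refine ⟨y, hylim.congr_dist (Metric.tendsto_nhds.2 fun ε hε => ?_)⟩
      simpa using hB ε hε
    push Not at hA hB
    obtain ⟨ε₁, hε₁, hA⟩ := hA
    obtain ⟨ε₂, hε₂, hB⟩ := hB
    obtain ⟨p, hp⟩ := hU.2.1.nonempty
    set ε := min ε₁ ε₂ with hε
    have hεpos : 0 < ε := lt_min hε₁ hε₂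
    -- the radius bounds `d_U(p, x_n) + L_n` for almost every `n`
    set R : ℝ := dist (ι p) x + CU * dist x y + 1 with hR
    set K : Set X := closedBall p R ∩ {z | cU * ε ≤ infDist z Uᶜ} with hK
    have hKc : IsCompact K := (isCompact_closedBall p R).inter_right
      (isClosed_le continuous_const (continuous_infDist_pt _))
    have hKU : K ⊆ U := fun z hz => by
      by_contra hzU
      have h1 : cU * ε ≤ infDist z Uᶜ := hz.2
      rw [infDist_zero_of_mem (mem_compl hzU)] at h1
      exact absurd h1 (not_le.2 (mul_pos hcU0 hεpos))
    have hbound : ∀ᶠ n in (𝒰 : Filter ℕ),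
        dist (ι p) (ι (xs n)) + CU * dist (ι (xs n)) (ι (ys n)) < R :=
      ((tendsto_const_nhds.dist hxlim).add ((hxlim.dist hylim).const_mul CU)).eventually_lt_const
        (by rw [hR]; linarith)
    have hmem : ∀ᶠ n in (𝒰 : Filter ℕ), g n t ∈ K := by
      filter_upwards [hA, hB, hbound] with n hAn hBn hRn
      refine ⟨mem_closedBall'.2 ?_, ?_⟩
      · have h1 := hcomp.dist_le hp (hgU n t ht)
        have h2 := dist_triangle (ι p) (ι (xs n)) (ι (g n t))
        have h3 := hglip n 0 (by simp) t ht
        rw [hg0 n] at h3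
        have h4 : CU * dist (ι (xs n)) (ι (ys n)) * |0 - t| ≤
            CU * dist (ι (xs n)) (ι (ys n)) := by
          refine mul_le_of_le_one_right (by positivity) ?_
          rw [zero_sub, abs_neg, abs_of_nonneg ht.1]
          exact ht.2
        linarith
      · exact (mul_le_mul_of_nonneg_left (min_le_min hAn hBn) hcU0.le).trans (hgδ n t ht)
    obtain ⟨z, hzK, hz⟩ := isCompact_iff_ultrafilter_le_nhds.1 hKc (𝒰.map fun n => g n t)
      (le_principal_iff.2 hmem)
    have hι := (hcomp.continuousOn hX hU.1).continuousAt (hU.1.mem_nhds (hKU hzK))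
    exact ⟨ι z, hι.tendsto.comp hz⟩
  have : Nonempty Ut := ⟨x⟩
  choose! γ hγ using hlim
  have hlip : ∀ s ∈ Icc (0 : ℝ) 1, ∀ t ∈ Icc (0 : ℝ) 1,
      dist (γ s) (γ t) ≤ CU * dist x y * |s - t| := fun s hs t ht =>
    le_of_tendsto_of_tendsto' ((hγ s hs).dist (hγ t ht))
      (((hxlim.dist hylim).const_mul CU).mul_const _) fun n => hglip n s hs t ht
  have hlip' : LipschitzOnWith (CU * dist x y).toNNReal γ (Icc 0 1) :=
    LipschitzOnWith.of_dist_le_mul fun s hs t ht => by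
      rw [Real.coe_toNNReal _ (by positivity), Real.dist_eq]
      exact hlip s hs t ht
  refine ⟨γ, hlip'.continuousOn, ?_, ?_, ?_, fun t ht => ?_⟩
  · refine tendsto_nhds_unique (hγ 0 (by simp)) ?_
    simpa only [hg0] using hxlim
  · refine tendsto_nhds_unique (hγ 1 (by simp)) ?_
    simpa only [hg1] using hylim
  · have h1 := hlip'.comp_eVariationOn_le (mapsTo_id (Icc (0 : ℝ) 1))
    have h2 := (monotoneOn_id (s := Icc (0 : ℝ) 1)).eVariationOn_eq (a := 0) (b := 1)
      (by simp) (by simp)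
    rw [inter_self] at h2
    calc curveLength γ ≤ _ := h1
      _ ≤ ENNReal.ofReal (CU * dist x y) * ENNReal.ofReal (id 1 - id 0) :=
        mul_le_mul_right h2.le _
      _ = ENNReal.ofReal (CU * dist x y) := by simp
  · refine le_of_tendsto_of_tendsto' (((hxlim.dist (hγ t ht)).min
      (hylim.dist (hγ t ht))).const_mul cU) ((hδt_cont.tendsto _).comp (hγ t ht)) fun n => ?_
    simp only [Function.comp]
    rw [hδt _ (hgU n t ht)]
    exact hgδ n t ht
end

section
/- Let (X,d) be a length space, let δ, δ' ∈ (0,1) and C_H ≥ 1. There exists a constant C' ∈ (0,∞), depending only on δ, δ' and C_H, with the following property: for every x ∈ X, R > 0 and every function u : B(x,R) → (0,∞) such that sup_{B(z,δs)} u ≤ C_H·inf_{B(z,δs)} u for every ball B(z,s) ⊆ B(x,R), one has sup_{B(x,δ'R)} u ≤ C'·inf_{B(x,δ'R)} u. In particular, if the elliptic Harnack inequality holds for some δ ∈ (0,1), then it holds (with a different constant) for any other δ' ∈ (0,1). -/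
/-!
The proof is a Harnack chain argument. In a length space approximate geodesics exist, so a point at
distance `< a + b` from `x` can be reached by a jump of size `< a` followed by one of size `< b`
(`IsLengthSpace.exists_dist_lt`). Iterating, every `y ∈ B(x, δ'R)` is joined to `x` by a chain of
`N` jumps shorter than `δ'R/N` that stays in `B(x, δ'R)`. Each point `z` of the chain has
`B(z, (1 - δ')R) ⊆ B(x, R)`, so once `δ'R/N ≤ δ(1 - δ')R` every jump costs at most a factor `CH`.
The required `N` depends only on `δ` and `δ'`, and comparing two points through the center `x`
gives the constant `CH ^ N * CH ^ N`.
-/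

open Set Metric

/-- Approximate intermediate points exist in a length space. -/
lemma IsLengthSpace.exists_dist_lt {X : Type*} [PseudoMetricSpace X] (hX : IsLengthSpace X)
    {x y : X} {a b : ℝ} (ha : 0 < a) (hb : 0 < b) (h : dist x y < a + b) :
    ∃ z, dist x z < a ∧ dist z y < b := by
  by_cases hxy : dist x y < a
  · exact ⟨y, hxy, by simpa using hb⟩
  push Not at hxy
  obtain ⟨M, hM1, hM2⟩ := exists_between h
  have hM0 : 0 < M := lt_of_le_of_lt dist_nonneg hM1
  have hlt : ENNReal.ofReal (dist x y) < ENNReal.ofReal M :=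
    (ENNReal.ofReal_lt_ofReal_iff hM0).2 hM1
  rw [hX x y] at hlt
  simp only [iInf_lt_iff] at hlt
  obtain ⟨γ, hγ, h0, h1, hL⟩ := hlt
  -- On a curve of length less than `M`, a point at distance `c > M - b` from `x` is closer
  -- than `b` to `y`.
  obtain ⟨c, hc1, hc2⟩ := exists_between (max_lt ha (by linarith : M - b < a))
  have hc0 : 0 < c := lt_of_le_of_lt (le_max_left _ _) hc1
  have hcM : M - b < c := lt_of_le_of_lt (le_max_right _ _) hc1
  have hf : ContinuousOn (fun t => dist x (γ t)) (Set.Icc 0 1) := by fun_prop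
  obtain ⟨t, ht, htc⟩ := intermediate_value_Icc zero_le_one hf
    (show c ∈ Set.Icc (dist x (γ 0)) (dist x (γ 1)) by
      rw [h0, h1, dist_self]; exact ⟨hc0.le, by linarith⟩)
  simp only at htc
  refine ⟨γ t, by linarith, ?_⟩
  have hsum : edist x (γ t) + edist (γ t) y ≤ curveLength γ := by
    have e1 : edist (γ 0) (γ t) ≤ eVariationOn γ (Set.Icc 0 t) :=
      eVariationOn.edist_le γ ⟨le_rfl, ht.1⟩ ⟨ht.1, le_rfl⟩
    have e2 : edist (γ t) (γ 1) ≤ eVariationOn γ (Set.Icc t 1) :=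
      eVariationOn.edist_le γ ⟨le_rfl, ht.2⟩ ⟨ht.2, le_rfl⟩
    rw [h0] at e1
    rw [h1] at e2
    refine (add_le_add e1 e2).trans ((eVariationOn.add_le_union γ ?_).trans ?_)
    · intro p hp q hq
      exact hp.2.trans hq.1
    · exact eVariationOn.mono γ (by rw [Set.Icc_union_Icc_eq_Icc ht.1 ht.2])
  have hlt := hsum.trans_lt hL
  rw [edist_dist, edist_dist, ← ENNReal.ofReal_add dist_nonneg dist_nonneg,
    ENNReal.ofReal_lt_ofReal_iff hM0] at hlt
  linarith

/-- A chain of `n` jumps of size less than `r` issued from `x`: if for every `z ∈ B(x, N r)` the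
values of `u` on `B(z, r)` are comparable to `u z` with constant `C`, then for `n ≤ N` its values
on `B(x, n r)` are comparable to `u x` with constant `C ^ n`. -/
lemma IsLengthSpace.harnack_chain {X : Type*} [PseudoMetricSpace X] (hX : IsLengthSpace X)
    {x : X} {r C : ℝ} {N : ℕ} {u : X → ℝ} (hr : 0 < r) (hC : 1 ≤ C)
    (hu : ∀ z, dist x z < N * r → ∀ y, dist z y < r → u y ≤ C * u z ∧ u z ≤ C * u y) :
    ∀ n : ℕ, n ≤ N → ∀ y, dist x y < n * r → u y ≤ C ^ n * u x ∧ u x ≤ C ^ n * u y := by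
  intro n
  induction n with
  | zero =>
    intro _ y hy
    simp only [Nat.cast_zero, zero_mul] at hy
    exact absurd hy (not_lt.2 dist_nonneg)
  | succ n ih =>
    intro hn y hy
    have hN : ((n : ℝ) + 1) ≤ N := by exact_mod_cast hn
    push_cast at hy
    rcases Nat.eq_zero_or_pos n with rfl | hpos
    · simp only [Nat.cast_zero, zero_add, one_mul] at hy hN
      simpa using hu x (by rw [dist_self]; positivity) y hy
    · obtain ⟨z, hz1, hz2⟩ := hX.exists_dist_lt (x := x) (y := y) (a := n * r) (b := r)
        (by positivity) hr (by linarith)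
      obtain ⟨i1, i2⟩ := ih (by omega) z hz1
      obtain ⟨j1, j2⟩ := hu z (hz1.trans_le (by gcongr; linarith)) y hz2
      have hC0 : 0 ≤ C := by linarith
      constructor
      · calc u y ≤ C * u z := j1
          _ ≤ C * (C ^ n * u x) := by gcongr
          _ = C ^ (n + 1) * u x := by ring
      · calc u x ≤ C ^ n * u z := i2
          _ ≤ C ^ n * (C * u y) := by gcongr
          _ = C ^ (n + 1) * u y := by ring

/-- in a length space, the elliptic Harnack inequality at scale `δ` implies
it at any other scale `δ' ∈ (0,1)`, with a constant `C'` depending only on `δ, δ'` and `C_H`: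
if `u` is positive on `B(x,R)` and satisfies `sup_{B(z,δs)} u ≤ C_H inf_{B(z,δs)} u` for every
ball `B(z,s) ⊆ B(x,R)`, then `sup_{B(x,δ'R)} u ≤ C' inf_{B(x,δ'R)} u`. -/
theorem statement_8 {X : Type*} [MetricSpace X] (hX : IsLengthSpace X)
    (δ δ' CH : ℝ) (hδ : δ ∈ Set.Ioo (0:ℝ) 1) (hδ' : δ' ∈ Set.Ioo (0:ℝ) 1) (hCH : 1 ≤ CH) :
    ∃ C' : ℝ, 0 < C' ∧ ∀ (x : X) (R : ℝ), 0 < R → ∀ u : X → ℝ,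
      (∀ y ∈ Metric.ball x R, 0 < u y) →
      (∀ (z : X) (s : ℝ), Metric.ball z s ⊆ Metric.ball x R →
        ∀ a ∈ Metric.ball z (δ * s), ∀ b ∈ Metric.ball z (δ * s), u a ≤ CH * u b) →
      ∀ a ∈ Metric.ball x (δ' * R), ∀ b ∈ Metric.ball x (δ' * R), u a ≤ C' * u b := by
  obtain ⟨hδ0, hδ1⟩ := hδ
  obtain ⟨hδ'0, hδ'1⟩ := hδ'
  have hε : 0 < δ * (1 - δ') := mul_pos hδ0 (by linarith)
  obtain ⟨N, hN⟩ := exists_nat_gt (δ' / (δ * (1 - δ')))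
  have hN0 : (0 : ℝ) < N := lt_trans (by positivity) hN
  have hNε : δ' < N * (δ * (1 - δ')) := (div_lt_iff₀ hε).1 hN
  have hC0 : 0 < CH := by linarith
  refine ⟨CH ^ N * CH ^ N, by positivity, ?_⟩
  intro x R hR u _ hH a ha b hb
  have hNr : N * (δ' * R / N) = δ' * R := by field_simp
  have hrs : δ' * R / N ≤ δ * ((1 - δ') * R) := by
    rw [div_le_iff₀ hN0]
    nlinarith
  have key := hX.harnack_chain (x := x) (r := δ' * R / N) (N := N) (u := u)
    (by positivity) hCH (by
      intro z hz y hy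
      rw [hNr] at hz
      have hsub : Metric.ball z ((1 - δ') * R) ⊆ Metric.ball x R :=
        Metric.ball_subset_ball' (by rw [dist_comm z x]; linarith)
      have hy' : y ∈ Metric.ball z (δ * ((1 - δ') * R)) := by
        rw [Metric.mem_ball, dist_comm]
        exact hy.trans_le hrs
      have hz' : z ∈ Metric.ball z (δ * ((1 - δ') * R)) :=
        Metric.mem_ball_self (dist_nonneg.trans_lt hy')
      exact ⟨hH z _ hsub y hy' z hz', hH z _ hsub z hz' y hy'⟩) N le_rfl
  rw [hNr] at key
  rw [Metric.mem_ball, dist_comm] at ha hb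
  calc u a ≤ CH ^ N * u x := (key a ha).1
    _ ≤ CH ^ N * (CH ^ N * u b) := by gcongr; exact (key b hb).2
    _ = CH ^ N * CH ^ N * u b := by ring
end

section
/- Let α > 1. Then the integral u(x) = ∫_{−∞}^{x} (1+t²)^{−α/2} dt converges for every x ∈ ℝ and defines a smooth, strictly positive, bounded, non-constant function u : ℝ → ℝ which satisfies u''(x) + (αx/(1+x²))·u'(x) = 0 for all x ∈ ℝ; equivalently, the function x ↦ (1+x²)^{α/2}·u'(x) is identically equal to 1. In particular, the operator L_α f = f'' + (αx/(1+x²))·f' on ℝ admits a non-constant bounded positive solution of L_α u = 0, so the Liouville property fails for L_α when α > 1. -/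
/-!
For `α > 1` the density `w t = (1 + t²)^(-α/2)` is integrable over all of `ℝ`
(`integrable_density`), so `u` is bounded by `∫ w`. It is positive because `w` is, and since
`u x` differs from `u 0` by `∫₀ˣ w`, the fundamental theorem of calculus gives `u' = w`
(`hasDerivAt_uFun`). Hence `(1 + x²)^(α/2) u' = 1`, `u` is smooth as `w` is, `u` is not constant
as `u' ≠ 0`, and differentiating `w` gives the second-order equation.
-/

/-- The function `u(x) = ∫_{−∞}^x (1+t²)^{−α/2} dt`. -/
noncomputable def uFun (α : ℝ) (x : ℝ) : ℝ :=
  ∫ t in Set.Iio x, (1 + t ^ 2) ^ (-(α / 2))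

open MeasureTheory Set

/-- The density is comparable to `|t| ^ (-α)` at infinity, and `α` exceeds the dimension. -/
lemma integrable_density {α : ℝ} (hα : 1 < α) :
    Integrable (fun t : ℝ => (1 + t ^ 2) ^ (-(α / 2))) := by
  have h := integrable_rpow_neg_one_add_norm_sq (E := ℝ) (μ := volume) (r := α) (by simpa using hα)
  simpa [neg_div] using h

lemma contDiff_density (α : ℝ) :
    ContDiff ℝ (⊤ : ℕ∞) (fun t : ℝ => (1 + t ^ 2) ^ (-(α / 2))) :=
  ContDiff.rpow_const_of_ne (by fun_prop) fun t => by positivity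

lemma hasDerivAt_density (α x : ℝ) :
    HasDerivAt (fun t : ℝ => (1 + t ^ 2) ^ (-(α / 2)))
      (-(α * x / (1 + x ^ 2) * (1 + x ^ 2) ^ (-(α / 2)))) x := by
  have hx : (0 : ℝ) < 1 + x ^ 2 := by positivity
  have h := (((hasDerivAt_id x).pow 2).const_add 1).rpow_const (p := -(α / 2)) (Or.inl hx.ne')
  refine h.congr_deriv ?_
  simp only [id, Pi.pow_apply]
  rw [Real.rpow_sub_one hx.ne']
  field_simp
  push_cast
  ring

lemma hasDerivAt_uFun {α : ℝ} (hα : 1 < α) (x : ℝ) :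
    HasDerivAt (uFun α) ((1 + x ^ 2) ^ (-(α / 2))) x := by
  have hi := integrable_density hα
  have hc := (contDiff_density α).continuous
  have e : uFun α = fun y => uFun α 0 + ∫ t in (0 : ℝ)..y, (1 + t ^ 2) ^ (-(α / 2)) := by
    funext y
    rw [← intervalIntegral.integral_Iic_sub_Iic hi.integrableOn hi.integrableOn]
    simp only [uFun, integral_Iic_eq_integral_Iio]
    ring
  rw [e]
  exact (hc.integral_hasStrictDerivAt 0 x).hasDerivAt.const_add _

lemma deriv_uFun {α : ℝ} (hα : 1 < α) :
    deriv (uFun α) = fun x => (1 + x ^ 2) ^ (-(α / 2)) :=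
  funext fun x => (hasDerivAt_uFun hα x).deriv

/-- for `α > 1`, the integral `u(x) = ∫_{−∞}^x (1+t²)^{−α/2} dt` converges
for every `x`, and `u` is a smooth, strictly positive, bounded, non-constant function
satisfying `u'' + (αx/(1+x²)) u' = 0`, equivalently `(1+x²)^{α/2} u' ≡ 1`.  In particular the
Liouville property fails for `L_α f = f'' + (αx/(1+x²)) f'` when `α > 1`. -/
theorem statement_14 (α : ℝ) (hα : 1 < α) :
    (∀ x : ℝ, MeasureTheory.IntegrableOn
        (fun t : ℝ => (1 + t ^ 2) ^ (-(α / 2))) (Set.Iio x)) ∧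
    ContDiff ℝ (⊤ : ℕ∞) (uFun α) ∧
    (∀ x, 0 < uFun α x) ∧
    (∃ C : ℝ, ∀ x, uFun α x ≤ C) ∧
    (∃ x y, uFun α x ≠ uFun α y) ∧
    (∀ x, deriv (deriv (uFun α)) x + α * x / (1 + x ^ 2) * deriv (uFun α) x = 0) ∧
    (∀ x, (1 + x ^ 2) ^ (α / 2) * deriv (uFun α) x = 1) := by
  have hi := integrable_density hα
  have hpos : ∀ t : ℝ, 0 < (1 + t ^ 2) ^ (-(α / 2)) := fun t => by positivity
  refine ⟨fun x => hi.integrableOn, ?_, fun x => ?_, ⟨∫ t : ℝ, (1 + t ^ 2) ^ (-(α / 2)), fun x => ?_⟩,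
    ?_, fun x => ?_, fun x => ?_⟩
  · rw [contDiff_infty_iff_deriv, deriv_uFun hα]
    exact ⟨fun x => (hasDerivAt_uFun hα x).differentiableAt, contDiff_density α⟩
  · rw [uFun, setIntegral_pos_iff_support_of_nonneg_ae
      (Filter.Eventually.of_forall fun t => (hpos t).le) hi.integrableOn]
    have hs : Function.support (fun t : ℝ => (1 + t ^ 2) ^ (-(α / 2))) = univ :=
      eq_univ_of_forall fun t => (hpos t).ne'
    simp [hs]
  · exact setIntegral_le_integral hi (Filter.Eventually.of_forall fun t => (hpos t).le)
  · by_contra! h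
    have hconst : uFun α = fun _ => uFun α 0 := funext fun x => h x 0
    have hd := congrFun (deriv_uFun hα) 0
    rw [hconst] at hd
    simp at hd
  · rw [deriv_uFun hα, (hasDerivAt_density α x).deriv]
    ring
  · have hx : (0 : ℝ) < 1 + x ^ 2 := by positivity
    rw [deriv_uFun hα]
    simp only
    rw [← Real.rpow_add hx, add_neg_cancel, Real.rpow_zero]
end
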